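/- arXiv:hep-th/0612180 — 6 statements merged into one kernel-verified Lean document; each statement's English description precedes it below -/
import Mathlib

section
/- For all real a, b with 0 < a < 2, 0 < b < 2 and a + b > 2, and every nonzero q ∈ ℝ⁴ (Euclidean four-space), the function k ↦ (‖k‖²)^{−a} · (‖k−q‖²)^{−b} is integrable on ℝ⁴ and π^{−2} · ∫_{ℝ⁴} (‖k‖²)^{−a} (‖k−q‖²)^{−b} dk = [Γ(a+b−2) Γ(2−a) Γ(2−b)] / [Γ(a) Γ(b) Γ(4−a−b)] · (‖q‖²)^{2−a−b}. -/
open MeasureTheory Real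

namespace Bubble

/-- Gamma integral as a lower Lebesgue integral. -/
lemma lgamma (c x : ℝ) (hc : 0 < c) (hx : 0 < x) :
    ∫⁻ s in Set.Ioi (0:ℝ), ENNReal.ofReal (s ^ (c - 1) * exp (-(x * s)))
      = ENNReal.ofReal (Gamma c * x ^ (-c)) := by
  have h := integral_rpow_mul_exp_neg_mul_Ioi hc hx
  have hv : (1 / x) ^ c * Gamma c = Gamma c * x ^ (-c) := by
    rw [one_div, inv_rpow hx.le, rpow_neg hx.le, mul_comm]
  have hpos : 0 < Gamma c * x ^ (-c) := mul_pos (Gamma_pos_of_pos hc) (rpow_pos_of_pos hx _)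
  rw [hv] at h
  rw [← h, ofReal_integral_eq_lintegral_ofReal]
  · by_contra hn
    have := integral_undef hn
    rw [h] at this
    exact hpos.ne' this
  · filter_upwards [self_mem_ae_restrict measurableSet_Ioi] with s hs
    exact mul_nonneg (rpow_nonneg (le_of_lt hs) _) (exp_pos _).le

/-- Scaling on the half-line. -/
lemma lscale (s : ℝ) (hs : 0 < s) (f : ℝ → ENNReal) :
    ∫⁻ t in Set.Ioi (0:ℝ), f t = ∫⁻ u in Set.Ioi (0:ℝ), ENNReal.ofReal s * f (s * u) := by
  have h := lintegral_image_eq_lintegral_abs_deriv_mul (s := Set.Ioi (0:ℝ))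
    (f := fun u => s * u) (f' := fun _ => s) measurableSet_Ioi
    (fun x _ => by simpa using ((hasDerivAt_id x).const_mul s).hasDerivWithinAt)
    (fun x _ y _ hxy => mul_left_cancel₀ hs.ne' hxy) f
  have hi : (fun u => s * u) '' Set.Ioi (0:ℝ) = Set.Ioi 0 := by
    ext y
    constructor
    · rintro ⟨u, hu, rfl⟩
      exact mul_pos hs hu
    · intro hy
      exact ⟨y / s, div_pos hy hs, by field_simp⟩
  rw [hi, abs_of_pos hs] at h
  exact h

/-- Beta integral on the half-line. -/
lemma lbeta (p r : ℝ) (hp : 0 < p) (hr : 0 < r) :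
    ENNReal.ofReal (Gamma (p + r)) *
      ∫⁻ u in Set.Ioi (0:ℝ), ENNReal.ofReal (u ^ (p - 1) * (1 + u) ^ (-(p + r)))
      = ENNReal.ofReal (Gamma p * Gamma r) := by
  rw [← lintegral_const_mul _ (by fun_prop)]
  calc _ = ∫⁻ u in Set.Ioi (0:ℝ), ∫⁻ s in Set.Ioi (0:ℝ), ENNReal.ofReal
            (u ^ (p - 1) * (s ^ (p + r - 1) * exp (-((1 + u) * s)))) := by
        refine setLIntegral_congr_fun measurableSet_Ioi fun u hu => ?_
        have hu : 0 < u := hu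
        have hg := lgamma (p + r) (1 + u) (by linarith) (by linarith)
        simp only [ENNReal.ofReal_mul (rpow_nonneg hu.le (p - 1))]
        rw [lintegral_const_mul _ (by fun_prop), hg,
          ENNReal.ofReal_mul (Gamma_pos_of_pos (by linarith)).le]
        ring
    _ = ∫⁻ s in Set.Ioi (0:ℝ), ∫⁻ u in Set.Ioi (0:ℝ), ENNReal.ofReal
            (u ^ (p - 1) * (s ^ (p + r - 1) * exp (-((1 + u) * s)))) := by
        apply lintegral_lintegral_swap
        fun_prop
    _ = ∫⁻ s in Set.Ioi (0:ℝ), ENNReal.ofReal (Gamma p) *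
          ENNReal.ofReal (s ^ (r - 1) * exp (-(1 * s))) := by
        refine setLIntegral_congr_fun measurableSet_Ioi fun s hs => ?_
        have hs : 0 < s := hs
        have hg := lgamma p s hp hs
        have h1 : ∀ u : ℝ, u ^ (p - 1) * (s ^ (p + r - 1) * exp (-((1 + u) * s))) =
            (s ^ (p + r - 1) * exp (-s)) * (u ^ (p - 1) * exp (-(s * u))) := by
          intro u
          rw [show -((1 + u) * s) = -s + -(s * u) by ring, exp_add]
          ring
        have h0 : 0 ≤ s ^ (p + r - 1) * exp (-s) := by positivity
        simp only [h1, ENNReal.ofReal_mul h0]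
        rw [lintegral_const_mul _ (by fun_prop), hg, ← ENNReal.ofReal_mul h0,
          ← ENNReal.ofReal_mul (Gamma_pos_of_pos hp).le]
        congr 1
        rw [show r - 1 = (p + r - 1) + (-p) by ring, rpow_add hs, one_mul]
        ring
    _ = _ := by
        rw [lintegral_const_mul _ (by fun_prop), lgamma r 1 hr one_pos,
          ← ENNReal.ofReal_mul (Gamma_pos_of_pos hp).le]
        simp

abbrev E4 := EuclideanSpace ℝ (Fin 4)

lemma lgauss (s t : ℝ) (hs : 0 < s) (ht : 0 < t) (q : E4) :
    ∫⁻ k : E4, ENNReal.ofReal (exp (-(‖k‖ ^ 2 * s)) * exp (-(‖k - q‖ ^ 2 * t)))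
      = ENNReal.ofReal (π ^ 2 * (s + t) ^ (-2 : ℝ) * exp (-(s * t / (s + t) * ‖q‖ ^ 2))) := by
  have hst : 0 < s + t := by linarith
  have h1 : ∀ k : E4, exp (-(‖k‖ ^ 2 * s)) * exp (-(‖k - q‖ ^ 2 * t)) =
      exp (-(s * t / (s + t) * ‖q‖ ^ 2)) * exp (-(s + t) * ‖k - (t / (s + t)) • q‖ ^ 2) := by
    intro k
    rw [← exp_add, ← exp_add]
    congr 1
    rw [norm_sub_sq_real, norm_sub_sq_real, norm_smul, inner_smul_right, mul_pow, norm_eq_abs,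
      sq_abs]
    field_simp
    ring
  have hg := GaussianFourier.integral_rexp_neg_mul_sq_norm (V := E4) hst
  have hd : ((Module.finrank ℝ E4 : ℝ) / 2) = 2 := by simp; norm_num
  rw [hd] at hg
  have hpos : 0 < (π / (s + t)) ^ (2:ℝ) := by positivity
  have hl : ∫⁻ k : E4, ENNReal.ofReal (exp (-(s + t) * ‖k‖ ^ 2))
      = ENNReal.ofReal ((π / (s + t)) ^ (2:ℝ)) := by
    rw [← hg, ofReal_integral_eq_lintegral_ofReal]
    · by_contra hn
      have := integral_undef hn
      rw [hg] at this
      exact hpos.ne' this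
    · exact Filter.Eventually.of_forall fun _ => (exp_pos _).le
  simp only [h1, ENNReal.ofReal_mul (exp_pos _).le]
  rw [lintegral_const_mul _ (by fun_prop),
    lintegral_sub_right_eq_self (fun k : E4 => ENNReal.ofReal (exp (-(s + t) * ‖k‖ ^ 2))), hl,
    ← ENNReal.ofReal_mul (exp_pos _).le]
  congr 1
  rw [rpow_neg hst.le, div_rpow pi_pos.le hst.le, rpow_two, rpow_two]
  ring

/-- Schwinger parametrisation. -/
lemma schwinger (a b : ℝ) (ha₀ : 0 < a) (hb₀ : 0 < b) (q : E4) :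
    ENNReal.ofReal (Gamma a * Gamma b) *
      ∫⁻ k : E4, ENNReal.ofReal ((‖k‖ ^ 2 : ℝ) ^ (-a) * (‖k - q‖ ^ 2 : ℝ) ^ (-b)) =
    ∫⁻ s in Set.Ioi (0:ℝ), ∫⁻ t in Set.Ioi (0:ℝ), ENNReal.ofReal (s ^ (a - 1) * t ^ (b - 1) *
      (π ^ 2 * (s + t) ^ (-2 : ℝ) * exp (-(s * t / (s + t) * ‖q‖ ^ 2)))) := by
  have hGa := Gamma_pos_of_pos ha₀
  have hGb := Gamma_pos_of_pos hb₀
  rw [← lintegral_const_mul _ (by fun_prop)]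
  calc _ = ∫⁻ k : E4, ∫⁻ s in Set.Ioi (0:ℝ), ∫⁻ t in Set.Ioi (0:ℝ), ENNReal.ofReal
            ((s ^ (a - 1) * exp (-(‖k‖ ^ 2 * s))) * (t ^ (b - 1) * exp (-(‖k - q‖ ^ 2 * t)))) := by
        refine lintegral_congr_ae ?_
        filter_upwards [(Set.countable_singleton (0:E4)).ae_notMem volume,
          (Set.countable_singleton q).ae_notMem volume] with k hk0 hkq
        have hx : 0 < ‖k‖ ^ 2 := by
          have : 0 < ‖k‖ := norm_pos_iff.2 (by simpa using hk0)
          positivity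
        have hy : 0 < ‖k - q‖ ^ 2 := by
          have : 0 < ‖k - q‖ := norm_pos_iff.2 (sub_ne_zero.2 (by simpa using hkq))
          positivity
        have e1 := lgamma a _ ha₀ hx
        have e2 := lgamma b _ hb₀ hy
        have : ∀ s ∈ Set.Ioi (0:ℝ), ∫⁻ t in Set.Ioi (0:ℝ), ENNReal.ofReal
            ((s ^ (a - 1) * exp (-(‖k‖ ^ 2 * s))) * (t ^ (b - 1) * exp (-(‖k - q‖ ^ 2 * t)))) =
            ENNReal.ofReal (s ^ (a - 1) * exp (-(‖k‖ ^ 2 * s))) *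
              ENNReal.ofReal (Gamma b * (‖k - q‖ ^ 2) ^ (-b)) := by
          intro s hs
          have hs : 0 < s := hs
          have h0 : 0 ≤ s ^ (a - 1) * exp (-(‖k‖ ^ 2 * s)) := by positivity
          simp only [ENNReal.ofReal_mul h0]
          rw [lintegral_const_mul _ (by fun_prop), e2]
        rw [setLIntegral_congr_fun measurableSet_Ioi this, lintegral_mul_const _ (by fun_prop), e1,
          ← ENNReal.ofReal_mul (by positivity), ← ENNReal.ofReal_mul (by positivity)]
        congr 1
        ring
    _ = ∫⁻ s in Set.Ioi (0:ℝ), ∫⁻ k : E4, ∫⁻ t in Set.Ioi (0:ℝ), ENNReal.ofReal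
            ((s ^ (a - 1) * exp (-(‖k‖ ^ 2 * s))) * (t ^ (b - 1) * exp (-(‖k - q‖ ^ 2 * t)))) := by
        apply lintegral_lintegral_swap
        apply Measurable.aemeasurable
        apply Measurable.lintegral_prod_right'
          (f := fun z : (E4 × ℝ) × ℝ => ENNReal.ofReal
            ((z.1.2 ^ (a - 1) * exp (-(‖z.1.1‖ ^ 2 * z.1.2))) *
              (z.2 ^ (b - 1) * exp (-(‖z.1.1 - q‖ ^ 2 * z.2)))))
        fun_prop
    _ = ∫⁻ s in Set.Ioi (0:ℝ), ∫⁻ t in Set.Ioi (0:ℝ), ∫⁻ k : E4, ENNReal.ofReal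
            ((s ^ (a - 1) * exp (-(‖k‖ ^ 2 * s))) * (t ^ (b - 1) * exp (-(‖k - q‖ ^ 2 * t)))) := by
        refine lintegral_congr fun s => ?_
        apply lintegral_lintegral_swap
        fun_prop
    _ = _ := by
        refine setLIntegral_congr_fun measurableSet_Ioi fun s hs => ?_
        refine setLIntegral_congr_fun measurableSet_Ioi fun t ht => ?_
        have hs : 0 < s := hs
        have ht : 0 < t := ht
        have h0 : 0 ≤ s ^ (a - 1) * t ^ (b - 1) := by positivity
        have h1 : ∀ k : E4, (s ^ (a - 1) * exp (-(‖k‖ ^ 2 * s))) *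
            (t ^ (b - 1) * exp (-(‖k - q‖ ^ 2 * t))) = (s ^ (a - 1) * t ^ (b - 1)) *
            (exp (-(‖k‖ ^ 2 * s)) * exp (-(‖k - q‖ ^ 2 * t))) := by
          intro k
          ring
        simp only [h1, ENNReal.ofReal_mul h0]
        rw [lintegral_const_mul _ (by fun_prop), lgauss s t hs ht q]

lemma params (a b Q : ℝ) (ha₂ : a < 2) (hb₂ : b < 2)
    (hab : 2 < a + b) (hQ : 0 < Q) :
    ENNReal.ofReal (Gamma (4 - a - b)) *
    ∫⁻ s in Set.Ioi (0:ℝ), ∫⁻ t in Set.Ioi (0:ℝ), ENNReal.ofReal (s ^ (a - 1) * t ^ (b - 1) *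
      (π ^ 2 * (s + t) ^ (-2 : ℝ) * exp (-(s * t / (s + t) * Q)))) =
    ENNReal.ofReal (π ^ 2 * (Gamma (a + b - 2) * Gamma (2 - a) * Gamma (2 - b)) *
      Q ^ (2 - a - b)) := by
  have hG := Gamma_pos_of_pos (show 0 < a + b - 2 by linarith)
  have hB := lbeta (2 - a) (2 - b) (by linarith) (by linarith)
  have key : ∫⁻ s in Set.Ioi (0:ℝ), ∫⁻ t in Set.Ioi (0:ℝ),
      ENNReal.ofReal (s ^ (a - 1) * t ^ (b - 1) *
      (π ^ 2 * (s + t) ^ (-2 : ℝ) * exp (-(s * t / (s + t) * Q)))) =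
      ENNReal.ofReal (π ^ 2 * Gamma (a + b - 2) * Q ^ (2 - a - b)) *
      ∫⁻ u in Set.Ioi (0:ℝ),
        ENNReal.ofReal (u ^ (2 - a - 1) * (1 + u) ^ (-(2 - a + (2 - b)))) := by
    calc _ = ∫⁻ s in Set.Ioi (0:ℝ), ∫⁻ u in Set.Ioi (0:ℝ), ENNReal.ofReal
              ((π ^ 2 * u ^ (b - 1) * (1 + u) ^ (-2 : ℝ)) *
                (s ^ (a + b - 2 - 1) * exp (-((u / (1 + u) * Q) * s)))) := by
          refine setLIntegral_congr_fun measurableSet_Ioi fun s hs => ?_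
          have hs : 0 < s := hs
          beta_reduce
          rw [lscale s hs]
          refine setLIntegral_congr_fun measurableSet_Ioi fun u hu => ?_
          have hu : 0 < u := hu
          beta_reduce
          rw [← ENNReal.ofReal_mul hs.le]
          congr 1
          have h1 : s * (s * u) / (s + s * u) * Q = (u / (1 + u) * Q) * s := by
            field_simp
          have h2 : s ^ (a + b - 2 - 1) = s * s ^ (a - 1) * s ^ (b - 1) * s ^ (-2 : ℝ) := by
            rw [show a + b - 2 - 1 = 1 + (a - 1) + (b - 1) + (-2) by ring, rpow_add hs,
              rpow_add hs, rpow_add hs, rpow_one]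
          rw [h1, h2, show s + s * u = s * (1 + u) by ring, mul_rpow hs.le hu.le,
            mul_rpow hs.le (by linarith)]
          ring
      _ = ∫⁻ u in Set.Ioi (0:ℝ), ∫⁻ s in Set.Ioi (0:ℝ), ENNReal.ofReal
              ((π ^ 2 * u ^ (b - 1) * (1 + u) ^ (-2 : ℝ)) *
                (s ^ (a + b - 2 - 1) * exp (-((u / (1 + u) * Q) * s)))) := by
          apply lintegral_lintegral_swap
          fun_prop
      _ = _ := by
          rw [← lintegral_const_mul _ (by fun_prop)]
          refine setLIntegral_congr_fun measurableSet_Ioi fun u hu => ?_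
          have hu : 0 < u := hu
          have hu1 : 0 < 1 + u := by linarith
          have h0 : 0 ≤ π ^ 2 * u ^ (b - 1) * (1 + u) ^ (-2 : ℝ) := by positivity
          simp only [ENNReal.ofReal_mul h0]
          rw [lintegral_const_mul _ (by fun_prop),
            lgamma (a + b - 2) _ (by linarith) (by positivity), ← ENNReal.ofReal_mul h0,
            ← ENNReal.ofReal_mul (by positivity)]
          congr 1
          have e1 : u ^ (2 - a - 1) = u ^ (b - 1) * u ^ (2 - a - b) := by
            rw [← rpow_add hu]
            congr 1
            ring
          have e2 : (1 + u) ^ (-(2 - a + (2 - b))) =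
              (1 + u) ^ (-2 : ℝ) * ((1 + u) ^ (2 - a - b))⁻¹ := by
            rw [← rpow_neg hu1.le, ← rpow_add hu1]
            congr 1
            ring
          rw [show -(a + b - 2) = 2 - a - b by ring, mul_rpow (by positivity) hQ.le,
            div_rpow hu.le hu1.le, e1, e2]
          ring
  rw [key, mul_left_comm, show 4 - a - b = 2 - a + (2 - b) by ring, hB,
    ← ENNReal.ofReal_mul (by positivity)]
  congr 1
  ring

end Bubble

/-- **The massless one-loop bubble in Euclidean four-space.**
For `0 < a < 2`, `0 < b < 2`, `a + b > 2` and `q ≠ 0` in `ℝ⁴`, the function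
`k ↦ (‖k‖²)^(−a) (‖k−q‖²)^(−b)` is integrable and
`π⁻² ∫ (‖k‖²)^(−a) (‖k−q‖²)^(−b) dk
  = Γ(a+b−2)Γ(2−a)Γ(2−b) / (Γ(a)Γ(b)Γ(4−a−b)) · (‖q‖²)^(2−a−b)`. -/
theorem one_loop_bubble_G4
    (a b : ℝ) (ha₀ : 0 < a) (ha₂ : a < 2) (hb₀ : 0 < b) (hb₂ : b < 2)
    (hab : 2 < a + b) (q : EuclideanSpace ℝ (Fin 4)) (hq : q ≠ 0) :
    Integrable (fun k : EuclideanSpace ℝ (Fin 4) =>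
        (‖k‖ ^ 2 : ℝ) ^ (-a) * (‖k - q‖ ^ 2 : ℝ) ^ (-b)) ∧
    π ^ (-2 : ℝ) *
        (∫ k : EuclideanSpace ℝ (Fin 4),
          (‖k‖ ^ 2 : ℝ) ^ (-a) * (‖k - q‖ ^ 2 : ℝ) ^ (-b)) =
      Gamma (a + b - 2) * Gamma (2 - a) * Gamma (2 - b) /
          (Gamma a * Gamma b * Gamma (4 - a - b)) *
        (‖q‖ ^ 2 : ℝ) ^ (2 - a - b) := by
  have hQ : 0 < ‖q‖ ^ 2 := by
    have : 0 < ‖q‖ := norm_pos_iff.2 hq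
    positivity
  have hGa := Gamma_pos_of_pos ha₀
  have hGb := Gamma_pos_of_pos hb₀
  have hG1 := Gamma_pos_of_pos (show 0 < a + b - 2 by linarith)
  have hG2 := Gamma_pos_of_pos (show 0 < 2 - a by linarith)
  have hG3 := Gamma_pos_of_pos (show 0 < 2 - b by linarith)
  have hG4 := Gamma_pos_of_pos (show 0 < 4 - a - b by linarith)
  have hP := Bubble.params a b _ ha₂ hb₂ hab hQ
  rw [← Bubble.schwinger a b ha₀ hb₀ q, ← mul_assoc, ← ENNReal.ofReal_mul hG4.le] at hP
  have hc : 0 < Gamma (4 - a - b) * (Gamma a * Gamma b) := by positivity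
  have hL : ∫⁻ k : EuclideanSpace ℝ (Fin 4),
      ENNReal.ofReal ((‖k‖ ^ 2 : ℝ) ^ (-a) * (‖k - q‖ ^ 2 : ℝ) ^ (-b)) =
      ENNReal.ofReal (π ^ 2 * (Gamma (a + b - 2) * Gamma (2 - a) * Gamma (2 - b)) *
        (‖q‖ ^ 2) ^ (2 - a - b) / (Gamma (4 - a - b) * (Gamma a * Gamma b))) := by
    rw [ENNReal.ofReal_div_of_pos hc, ← hP, mul_comm, ENNReal.mul_div_cancel_right]
    · simpa using hc
    · exact ENNReal.ofReal_ne_top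
  have hm : AEStronglyMeasurable (fun k : EuclideanSpace ℝ (Fin 4) =>
        (‖k‖ ^ 2 : ℝ) ^ (-a) * (‖k - q‖ ^ 2 : ℝ) ^ (-b)) :=
    (by fun_prop : Measurable _).aestronglyMeasurable
  have hn : 0 ≤ᵐ[volume] (fun k : EuclideanSpace ℝ (Fin 4) =>
        (‖k‖ ^ 2 : ℝ) ^ (-a) * (‖k - q‖ ^ 2 : ℝ) ^ (-b)) :=
    Filter.Eventually.of_forall fun k => by
      show (0:ℝ) ≤ _
      positivity
  refine ⟨⟨hm, ?_⟩, ?_⟩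
  · rw [hasFiniteIntegral_iff_ofReal hn, hL]
    exact ENNReal.ofReal_lt_top
  · rw [integral_eq_lintegral_of_nonneg_ae hn hm, hL, ENNReal.toReal_ofReal (by positivity),
      rpow_neg pi_pos.le, rpow_two]
    field_simp
end

section
/- For every real ρ with 0 < ρ < 1 and every nonzero q ∈ ℝ⁴ (Euclidean four-space), the function k ↦ (‖k‖²)^{−1−ρ} · (‖k−q‖²)^{−1} is integrable on ℝ⁴ and the normalized one-loop Mellin transform F₁(ρ; q) := (‖q‖²)^{ρ} · π^{−2} · ∫_{ℝ⁴} (‖k‖²)^{−1−ρ} (‖k−q‖²)^{−1} dk equals 1/(ρ(1−ρ)). -/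
open MeasureTheory Real
open Set

lemma L1 (a r : ℝ) (ha : 0 < a) (hr : 0 < r) :
    ∫⁻ s in Ioi (0:ℝ), ENNReal.ofReal (s ^ (a-1) * exp (-(r*s))) =
      ENNReal.ofReal ((1/r)^a * Gamma a) := by
  rw [← Real.integral_rpow_mul_exp_neg_mul_Ioi ha hr]
  rw [ofReal_integral_eq_lintegral_ofReal]
  · apply Integrable.of_integral_ne_zero
    rw [Real.integral_rpow_mul_exp_neg_mul_Ioi ha hr]
    have := Gamma_pos_of_pos ha
    positivity
  · filter_upwards [self_mem_ae_restrict measurableSet_Ioi] with s hs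
    have : 0 < s := hs
    simp only [Pi.zero_apply]
    positivity

lemma L2 (s t : ℝ) (hs : 0 < s) (ht : 0 < t) (q : EuclideanSpace ℝ (Fin 4)) :
    ∫⁻ k : EuclideanSpace ℝ (Fin 4), ENNReal.ofReal (exp (-(‖k‖^2*s)) * exp (-(‖k-q‖^2*t))) =
      ENNReal.ofReal (π^2 * ((s+t)^2)⁻¹ * exp (-(‖q‖^2 * (s*t/(s+t))))) := by
  have hst : 0 < s + t := by positivity
  have key : ∀ k : EuclideanSpace ℝ (Fin 4),
      exp (-(‖k‖^2*s)) * exp (-(‖k-q‖^2*t)) =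
      exp (-(s+t) * ‖k - (t/(s+t)) • q‖^2) * exp (-(‖q‖^2 * (s*t/(s+t)))) := by
    intro k
    rw [← exp_add, ← exp_add]
    congr 1
    rw [@norm_sub_sq_real, @norm_sub_sq_real, inner_smul_right, norm_smul, mul_pow,
      Real.norm_eq_abs, sq_abs]
    field_simp
    ring
  simp_rw [key]
  have hint : ∫ k : EuclideanSpace ℝ (Fin 4), exp (-(s+t) * ‖k - (t/(s+t)) • q‖^2) * exp (-(‖q‖^2 * (s*t/(s+t)))) = π^2 * ((s+t)^2)⁻¹ * exp (-(‖q‖^2 * (s*t/(s+t)))) := by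
    rw [integral_mul_const, integral_sub_right_eq_self (fun k : EuclideanSpace ℝ (Fin 4) => exp (-(s+t) * ‖k‖^2))]
    rw [GaussianFourier.integral_rexp_neg_mul_sq_norm hst]
    congr 1
    simp only [finrank_euclideanSpace, Fintype.card_fin]
    rw [show ((4:ℕ):ℝ)/2 = (2:ℕ) by norm_num, rpow_natCast, div_pow, div_eq_mul_inv]
  rw [← hint, ofReal_integral_eq_lintegral_ofReal]
  · apply Integrable.of_integral_ne_zero
    rw [hint]; positivity
  · exact ae_of_all _ (fun k => by positivity)

lemma L3 (s Q : ℝ) (hs : 0 < s) (hQ : 0 < Q) :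
    ∫⁻ t in Ioi (0:ℝ), ENNReal.ofReal (((s+t)^2)⁻¹ * exp (-(Q * (s*t/(s+t))))) =
      ENNReal.ofReal ((s^2)⁻¹ * (1 - exp (-(Q*s)))/Q) := by
  have hd : ∀ t ∈ Ici (0:ℝ), HasDerivAt (fun t => (s^2)⁻¹ * (1 - exp (-(Q*(s*t/(s+t)))))/Q)
      (((s+t)^2)⁻¹ * exp (-(Q * (s*t/(s+t))))) t := by
    intro t ht
    have ht : 0 ≤ t := ht
    have h0 : s + t ≠ 0 := by positivity
    have h1 : HasDerivAt (fun t => s*t/(s+t)) ((s*1*(s+t) - s*t*1)/(s+t)^2) t :=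
      ((hasDerivAt_id' t).const_mul s).div ((hasDerivAt_id' t).const_add s) h0
    have h2 := ((((h1.const_mul Q).neg.exp).const_sub 1).const_mul (s^2)⁻¹).div_const Q
    refine h2.congr_deriv ?_
    simp only [Pi.neg_apply]
    field_simp
    ring
  have hp : ∀ t ∈ Ioi (0:ℝ), 0 ≤ (((s+t)^2)⁻¹ * exp (-(Q * (s*t/(s+t))))) := fun t _ => by positivity
  have hl : Filter.Tendsto (fun t => (s^2)⁻¹ * (1 - exp (-(Q*(s*t/(s+t)))))/Q) Filter.atTop
      (nhds ((s^2)⁻¹ * (1 - exp (-(Q*s)))/Q)) := by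
    have h3 : Filter.Tendsto (fun t => s*t/(s+t)) Filter.atTop (nhds s) := by
      have h4 : Filter.Tendsto (fun t => s - s^2/(s+t)) Filter.atTop (nhds (s-0)) :=
        tendsto_const_nhds.sub (tendsto_const_nhds.div_atTop
          (Filter.tendsto_atTop_add_const_left _ _ Filter.tendsto_id))
      rw [sub_zero] at h4
      refine h4.congr' ?_
      filter_upwards [Filter.eventually_gt_atTop 0] with t ht
      field_simp
      ring
    have h5 : Continuous (fun x => (s^2)⁻¹ * (1 - exp (-(Q*x)))/Q) := by fun_prop
    exact (h5.tendsto s).comp h3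
  have hint := integral_Ioi_of_hasDerivAt_of_nonneg' hd hp hl
  have hi := integrableOn_Ioi_deriv_of_nonneg' hd hp hl
  simp at hint
  rw [← ofReal_integral_eq_lintegral_ofReal hi]
  · rw [hint]
  · filter_upwards [self_mem_ae_restrict measurableSet_Ioi] with s hs using hp s hs

lemma L3' (s Q : ℝ) (hs : 0 < s) (hQ : 0 < Q) :
    ∫⁻ v in Ioc (0:ℝ) 1, ENNReal.ofReal (exp (-(Q * v * s))) =
      ENNReal.ofReal (s⁻¹ * (1 - exp (-(Q*s)))/Q) := by
  have hint : ∫ v in (0:ℝ)..1, exp (-(Q * v * s)) = s⁻¹ * (1 - exp (-(Q*s)))/Q := by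
    have hd : ∀ v ∈ uIcc (0:ℝ) 1, HasDerivAt (fun v => - s⁻¹ * exp (-(Q*v*s))/Q) (exp (-(Q * v * s))) v := by
      intro v _
      have h2 := (((((hasDerivAt_id' v).const_mul Q).mul_const s).neg.exp).const_mul (-s⁻¹)).div_const Q
      refine h2.congr_deriv ?_
      simp only [Pi.neg_apply]
      field_simp
    rw [intervalIntegral.integral_eq_sub_of_hasDerivAt hd (Continuous.intervalIntegrable (by fun_prop) _ _)]
    simp
    ring
  rw [← hint, intervalIntegral.integral_of_le zero_le_one, ofReal_integral_eq_lintegral_ofReal]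
  · exact (Continuous.intervalIntegrable (by fun_prop) _ _ : IntervalIntegrable (fun v => exp (-(Q * v * s))) volume 0 1).1
  · exact ae_of_all _ (fun k => by positivity)

lemma L4 (ρ : ℝ) (h1 : ρ < 1) :
    ∫⁻ v in Ioc (0:ℝ) 1, ENNReal.ofReal (v^(-ρ)) = ENNReal.ofReal (1/(1-ρ)) := by
  have hint : ∫ v in (0:ℝ)..1, v^(-ρ) = 1/(1-ρ) := by
    rw [integral_rpow (by left; linarith), one_rpow, zero_rpow (by linarith)]
    ring
  rw [← hint, intervalIntegral.integral_of_le zero_le_one, ofReal_integral_eq_lintegral_ofReal]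
  · exact (intervalIntegral.intervalIntegrable_rpow' (by linarith)).1
  · filter_upwards [self_mem_ae_restrict measurableSet_Ioc] with s hs 
    exact rpow_nonneg hs.1.le _

lemma L5 (ρ Q : ℝ) (h0 : 0 < ρ) (h1 : ρ < 1) (hQ : 0 < Q) :
    ∫⁻ s in Ioi (0:ℝ), ENNReal.ofReal (s^ρ * ((s^2)⁻¹ * (1 - exp (-(Q*s)))/Q)) =
      ENNReal.ofReal (Q^(-ρ) * Gamma ρ / (1-ρ)) := by
  have e1 : ∀ s ∈ Ioi (0:ℝ), ENNReal.ofReal (s^ρ * ((s^2)⁻¹ * (1 - exp (-(Q*s)))/Q)) =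
      ∫⁻ v in Ioc (0:ℝ) 1, ENNReal.ofReal (s^(ρ-1) * exp (-(Q * v * s))) := by
    intro s hs
    have hs : 0 < s := hs
    have hp : 0 ≤ s^(ρ-1) := by positivity
    simp_rw [ENNReal.ofReal_mul hp]
    rw [lintegral_const_mul' _ _ ENNReal.ofReal_ne_top, L3' s Q hs hQ, ← ENNReal.ofReal_mul hp,
      rpow_sub_one hs.ne']
    congr 1
    field_simp
  rw [setLIntegral_congr_fun measurableSet_Ioi e1, lintegral_lintegral_swap (by fun_prop)]
  have e2 : ∀ v ∈ Ioc (0:ℝ) 1, ∫⁻ s in Ioi (0:ℝ), ENNReal.ofReal (s^(ρ-1) * exp (-(Q * v * s))) =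
      ENNReal.ofReal (Q^(-ρ) * Gamma ρ) * ENNReal.ofReal (v^(-ρ)) := by
    intro v hv
    have hv := hv.1
    have hG := Gamma_pos_of_pos h0
    rw [L1 ρ (Q*v) h0 (by positivity), ← ENNReal.ofReal_mul (by positivity)]
    congr 1
    rw [one_div, inv_rpow (by positivity), mul_rpow hQ.le hv.le, rpow_neg hQ.le, rpow_neg hv.le, mul_inv]
    ring
  have hG := Gamma_pos_of_pos h0
  rw [setLIntegral_congr_fun measurableSet_Ioc e2, lintegral_const_mul' _ _ ENNReal.ofReal_ne_top,
    L4 ρ h1, ← ENNReal.ofReal_mul (by positivity), mul_one_div]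

lemma L6 (ρ : ℝ) (h0 : 0 < ρ) (h1 : ρ < 1)
    (q : EuclideanSpace ℝ (Fin 4)) (hq : q ≠ 0) :
    ∫⁻ k : EuclideanSpace ℝ (Fin 4), ENNReal.ofReal
        ((‖k‖ ^ 2 : ℝ) ^ (-1 - ρ) * (‖k - q‖ ^ 2 : ℝ) ^ (-1 : ℝ)) =
      ENNReal.ofReal (π^2 * (‖q‖^2)^(-ρ) / (ρ * (1-ρ))) := by
  have hQ : 0 < ‖q‖^2 := by have := norm_pos_iff.2 hq; positivity
  have hG := Gamma_pos_of_pos (show 0 < 1 + ρ by linarith)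
  have hG0 := Gamma_pos_of_pos h0
  have e1 : ∀ᵐ k : EuclideanSpace ℝ (Fin 4), ENNReal.ofReal
        ((‖k‖ ^ 2 : ℝ) ^ (-1 - ρ) * (‖k - q‖ ^ 2 : ℝ) ^ (-1 : ℝ)) =
      ENNReal.ofReal (Gamma (1+ρ))⁻¹ * ∫⁻ s in Ioi (0:ℝ), ∫⁻ t in Ioi (0:ℝ),
        ENNReal.ofReal (s^ρ * (exp (-(‖k‖^2*s)) * exp (-(‖k-q‖^2*t)))) := by
    filter_upwards [Measure.ae_ne volume 0, Measure.ae_ne volume q] with k hk hkq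
    have ha : 0 < ‖k‖^2 := by have := norm_pos_iff.2 hk; positivity
    have hb : 0 < ‖k-q‖^2 := by have := norm_pos_iff.2 (sub_ne_zero.2 hkq); positivity
    have hT := L1 1 _ one_pos hb
    have hS := L1 (1+ρ) _ (by linarith) ha
    simp only [sub_self, rpow_zero, one_mul, Gamma_one, rpow_one, mul_one, add_sub_cancel_left] at hT hS
    have e2 : ∀ s ∈ Ioi (0:ℝ), ∫⁻ t in Ioi (0:ℝ),
        ENNReal.ofReal (s^ρ * (exp (-(‖k‖^2*s)) * exp (-(‖k-q‖^2*t)))) =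
        ENNReal.ofReal (s^ρ * exp (-(‖k‖^2*s))) * ENNReal.ofReal (1/‖k-q‖^2) := by
      intro s hs
      have hs : 0 < s := hs
      rw [← hT, ← lintegral_const_mul' _ _ ENNReal.ofReal_ne_top]
      congr 1 with t
      rw [← ENNReal.ofReal_mul (by positivity), mul_assoc]
    rw [setLIntegral_congr_fun measurableSet_Ioi e2, lintegral_mul_const' _ _ ENNReal.ofReal_ne_top,
      hS, ← ENNReal.ofReal_mul (by positivity), ← ENNReal.ofReal_mul (by positivity)]
    congr 1
    rw [rpow_neg_one, one_div, inv_rpow ha.le, show -1 - ρ = -(1+ρ) by ring, rpow_neg ha.le]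
    field_simp
  rw [lintegral_congr_ae e1, lintegral_const_mul' _ _ ENNReal.ofReal_ne_top,
    lintegral_lintegral_swap]
  swap
  · apply Measurable.aemeasurable
    apply Measurable.lintegral_prod_right
    fun_prop
  have e3 : ∀ s ∈ Ioi (0:ℝ), ∫⁻ k : EuclideanSpace ℝ (Fin 4), ∫⁻ t in Ioi (0:ℝ),
        ENNReal.ofReal (s^ρ * (exp (-(‖k‖^2*s)) * exp (-(‖k-q‖^2*t)))) =
      ENNReal.ofReal (π^2) * ENNReal.ofReal (s^ρ * ((s^2)⁻¹ * (1 - exp (-(‖q‖^2*s)))/‖q‖^2)) := by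
    intro s hs
    have hs : 0 < s := hs
    rw [lintegral_lintegral_swap (by fun_prop)]
    have e4 : ∀ t ∈ Ioi (0:ℝ), ∫⁻ k : EuclideanSpace ℝ (Fin 4),
        ENNReal.ofReal (s^ρ * (exp (-(‖k‖^2*s)) * exp (-(‖k-q‖^2*t)))) =
        ENNReal.ofReal (π^2 * s^ρ) * ENNReal.ofReal (((s+t)^2)⁻¹ * exp (-(‖q‖^2 * (s*t/(s+t))))) := by
      intro t ht
      have hp : 0 ≤ s^ρ := by positivity
      simp_rw [ENNReal.ofReal_mul hp]
      rw [lintegral_const_mul' _ _ ENNReal.ofReal_ne_top, L2 s t hs ht,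
        ← ENNReal.ofReal_mul hp, ← ENNReal.ofReal_mul (by positivity)]
      congr 1
      ring
    rw [setLIntegral_congr_fun measurableSet_Ioi e4, lintegral_const_mul' _ _ ENNReal.ofReal_ne_top,
      L3 s _ hs hQ, ← ENNReal.ofReal_mul (by positivity), ← ENNReal.ofReal_mul (by positivity), mul_assoc]
  have h1' : 0 < 1 - ρ := by linarith
  rw [setLIntegral_congr_fun measurableSet_Ioi e3, lintegral_const_mul' _ _ ENNReal.ofReal_ne_top,
    L5 ρ _ h0 h1 hQ, ← ENNReal.ofReal_mul (by positivity), ← ENNReal.ofReal_mul (by positivity)]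
  congr 1
  rw [add_comm 1 ρ, Gamma_add_one h0.ne']
  field_simp

theorem one_loop_mellin_transform
    (ρ : ℝ) (hρ₀ : 0 < ρ) (hρ₁ : ρ < 1)
    (q : EuclideanSpace ℝ (Fin 4)) (hq : q ≠ 0) :
    Integrable (fun k : EuclideanSpace ℝ (Fin 4) =>
        (‖k‖ ^ 2 : ℝ) ^ (-1 - ρ) * (‖k - q‖ ^ 2 : ℝ) ^ (-1 : ℝ)) ∧
    (‖q‖ ^ 2 : ℝ) ^ ρ * (π ^ (-2 : ℝ) *
        (∫ k : EuclideanSpace ℝ (Fin 4),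
          (‖k‖ ^ 2 : ℝ) ^ (-1 - ρ) * (‖k - q‖ ^ 2 : ℝ) ^ (-1 : ℝ))) =
      1 / (ρ * (1 - ρ)) := by
  have hL := L6 ρ hρ₀ hρ₁ q hq
  have hQ : 0 < ‖q‖^2 := by have := norm_pos_iff.2 hq; positivity
  have h1' : 0 < 1 - ρ := by linarith
  have hm : AEStronglyMeasurable (fun k : EuclideanSpace ℝ (Fin 4) =>
        (‖k‖ ^ 2 : ℝ) ^ (-1 - ρ) * (‖k - q‖ ^ 2 : ℝ) ^ (-1 : ℝ)) volume :=
    Measurable.aestronglyMeasurable (by fun_prop)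
  have hn : 0 ≤ᵐ[volume] (fun k : EuclideanSpace ℝ (Fin 4) =>
        (‖k‖ ^ 2 : ℝ) ^ (-1 - ρ) * (‖k - q‖ ^ 2 : ℝ) ^ (-1 : ℝ)) :=
    ae_of_all _ (fun k => by simp only [Pi.zero_apply]; positivity)
  refine ⟨⟨hm, ?_⟩, ?_⟩
  · rw [hasFiniteIntegral_iff_ofReal hn, hL]
    exact ENNReal.ofReal_lt_top
  · rw [integral_eq_lintegral_of_nonneg_ae hn hm, hL, ENNReal.toReal_ofReal (by positivity),
      rpow_neg hQ.le, show (-2:ℝ) = -((2:ℕ):ℝ) by norm_num, rpow_neg pi_pos.le, rpow_natCast]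
    field_simp
end

section
/- For every real ρ with 0 < ρ < 1 and every nonzero q ∈ ℝ⁴, the normalized one-loop Mellin transform F₁(ρ; q) := (‖q‖²)^{ρ} · π^{−2} · ∫_{ℝ⁴} (‖k‖²)^{−1−ρ} (‖k−q‖²)^{−1} dk does not depend on q and is invariant under the conformal reflection ρ ↦ 1 − ρ: for all nonzero q, q′ ∈ ℝ⁴, F₁(ρ; q) = F₁(1−ρ; q′). -/
open MeasureTheory Real

/-- The normalized Euclidean one-loop Mellin transform
`F₁(ρ; q) = (‖q‖²)^ρ · π⁻² · ∫_{ℝ⁴} (‖k‖²)^(−1−ρ) (‖k−q‖²)^(−1) dk`. -/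
noncomputable def F₁ (ρ : ℝ) (q : EuclideanSpace ℝ (Fin 4)) : ℝ :=
  (‖q‖ ^ 2 : ℝ) ^ ρ * (π ^ (-2 : ℝ) *
    ∫ k : EuclideanSpace ℝ (Fin 4),
      (‖k‖ ^ 2 : ℝ) ^ (-1 - ρ) * (‖k - q‖ ^ 2 : ℝ) ^ (-1 : ℝ))

lemma aux_pointwise (ρ A x D : ℝ) (hA : 0 < A) (hx : 0 < x) :
    A ^ ρ * ((A / x) ^ 4 * ((A ^ 2 / x) ^ (-1 - ρ) * (A / x * D) ^ (-1 : ℝ))) =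
      A ^ (1 - ρ) * (x ^ (-1 - (1 - ρ)) * D ^ (-1 : ℝ)) := by
  have h1 : (A ^ 2 / x) ^ (-1 - ρ) = x / A ^ 2 * (x ^ ρ / (A ^ ρ) ^ 2) := by
    rw [Real.rpow_sub (by positivity), Real.rpow_neg_one, Real.div_rpow (by positivity) hx.le,
      ← Real.rpow_natCast, ← Real.rpow_mul hA.le, mul_comm _ ρ, Real.rpow_mul hA.le]
    norm_num
    field_simp
  have h2 : x ^ (-1 - (1 - ρ)) = x ^ ρ / x ^ 2 := by
    rw [show -1 - (1 - ρ) = ρ - (2 : ℕ) by push_cast; ring, Real.rpow_sub hx, Real.rpow_natCast]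
  have h3 : A ^ (1 - ρ) = A / A ^ ρ := by rw [Real.rpow_sub hA, Real.rpow_one]
  rw [h1, h2, h3, Real.rpow_neg_one, Real.rpow_neg_one, mul_inv]
  have := Real.rpow_pos_of_pos hA ρ
  field_simp

lemma aux_inversion (ρ : ℝ) (q : EuclideanSpace ℝ (Fin 4)) (hq : q ≠ 0) :
    F₁ ρ q = F₁ (1 - ρ) q := by
  have hR : ‖q‖ ≠ 0 := norm_ne_zero_iff.2 hq
  set T := EuclideanGeometry.inversion (0 : EuclideanSpace ℝ (Fin 4)) ‖q‖ with hT
  have himg : T '' {0}ᶜ = {0}ᶜ := by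
    rw [Set.image_compl_eq (EuclideanGeometry.inversion_bijective _ hR)]
    simp [hT]
  have hres : ∀ g : EuclideanSpace ℝ (Fin 4) → ℝ, ∫ k in {0}ᶜ, g k = ∫ k, g k := by
    intro g
    rw [restrict_compl_singleton]
  have key := integral_image_eq_integral_abs_det_fderiv_smul volume
    (s := ({0}ᶜ : Set (EuclideanSpace ℝ (Fin 4)))) (f := T)
    (measurableSet_singleton _).compl
    (fun x hx => (EuclideanGeometry.hasFDerivAt_inversion (R := ‖q‖) hx).hasFDerivWithinAt)
    (EuclideanGeometry.inversion_injective _ hR).injOn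
    (fun k => (‖k‖ ^ 2 : ℝ) ^ (-1 - ρ) * (‖k - q‖ ^ 2 : ℝ) ^ (-1 : ℝ))
  rw [himg, hres] at key
  unfold F₁
  rw [key, mul_left_comm, mul_left_comm ((‖q‖ ^ 2) ^ (1 - ρ))]
  congr 1
  rw [← integral_const_mul, ← integral_const_mul, ← hres (fun k => _ * (_ * _))]
  refine setIntegral_congr_fun (measurableSet_singleton _).compl ?_
  intro k hk
  have hk0 : k ≠ 0 := hk
  have hk' : 0 < ‖k‖ := norm_pos_iff.2 hk0
  have n1 : ‖T k‖ ^ 2 = (‖q‖ ^ 2) ^ 2 / ‖k‖ ^ 2 := by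
    have := EuclideanGeometry.dist_inversion_center (0 : EuclideanSpace ℝ (Fin 4)) k ‖q‖
    rw [dist_zero_right, dist_zero_right] at this
    rw [hT, this, div_pow]
  have n2 : ‖T k - q‖ ^ 2 = ‖q‖ ^ 2 / ‖k‖ ^ 2 * ‖k - q‖ ^ 2 := by
    have := EuclideanGeometry.dist_inversion_inversion hk0 hq ‖q‖
    have h2 := EuclideanGeometry.inversion_dist_center (0 : EuclideanSpace ℝ (Fin 4)) q
    rw [dist_zero_right] at h2
    rw [h2, dist_zero_right, dist_zero_right, dist_eq_norm, dist_eq_norm] at this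
    rw [hT, this]
    field_simp
  have n3 : |((‖q‖ / dist k 0) ^ 2 • ((Submodule.span ℝ {k - 0})ᗮ.reflection :
      EuclideanSpace ℝ (Fin 4) →L[ℝ] EuclideanSpace ℝ (Fin 4))).det| =
      (‖q‖ ^ 2 / ‖k‖ ^ 2) ^ 4 := by
    have hd := Submodule.det_reflection (𝕜 := ℝ) (Submodule.span ℝ {k - 0})ᗮ
    rw [ContinuousLinearMap.det, ContinuousLinearMap.coe_smul, LinearMap.det_smul, abs_mul]
    have : |LinearMap.det (((Submodule.span ℝ {k - 0})ᗮ.reflection :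
      EuclideanSpace ℝ (Fin 4) →L[ℝ] EuclideanSpace ℝ (Fin 4)) :
      EuclideanSpace ℝ (Fin 4) →ₗ[ℝ] EuclideanSpace ℝ (Fin 4))| = 1 := by
      erw [hd]
      simp
    rw [this, finrank_euclideanSpace_fin, dist_zero_right, div_pow, mul_one, abs_of_nonneg]
    positivity
  simp only [smul_eq_mul]
  rw [n3, n1, n2]
  exact aux_pointwise ρ _ _ _ (by positivity) (by positivity)

lemma aux_isometry (ρ : ℝ) (q q' : EuclideanSpace ℝ (Fin 4)) (h : ‖q‖ = ‖q'‖) :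
    F₁ ρ q = F₁ ρ q' := by
  set L := (Submodule.span ℝ {q - q'})ᗮ.reflection
  have hL : L q = q' := Submodule.reflection_sub h
  unfold F₁
  rw [h, ← (L.measurePreserving).integral_comp L.toHomeomorph.measurableEmbedding
    (fun k => (‖k‖ ^ 2 : ℝ) ^ (-1 - ρ) * (‖k - q'‖ ^ 2 : ℝ) ^ (-1 : ℝ))]
  have : ∀ k, ‖L k - q'‖ = ‖k - q‖ := fun k => by rw [← hL, ← map_sub, L.norm_map]
  simp only [this, L.norm_map]

lemma aux_scale (ρ c : ℝ) (hc : 0 < c) (q : EuclideanSpace ℝ (Fin 4)) :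
    F₁ ρ (c • q) = F₁ ρ q := by
  have key := Measure.integral_comp_smul volume (fun k : EuclideanSpace ℝ (Fin 4) =>
    (‖k‖ ^ 2 : ℝ) ^ (-1 - ρ) * (‖k - c • q‖ ^ 2 : ℝ) ^ (-1 : ℝ)) c
  rw [finrank_euclideanSpace_fin, abs_of_pos (by positivity), smul_eq_mul] at key
  have e : ∀ k : EuclideanSpace ℝ (Fin 4),
      (‖c • k‖ ^ 2 : ℝ) ^ (-1 - ρ) * (‖c • k - c • q‖ ^ 2 : ℝ) ^ (-1 : ℝ) =
      ((c ^ 2) ^ ρ * c ^ 4)⁻¹ * ((‖k‖ ^ 2 : ℝ) ^ (-1 - ρ) * (‖k - q‖ ^ 2 : ℝ) ^ (-1 : ℝ)) := by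
    intro k
    rw [← smul_sub, norm_smul, norm_smul, Real.norm_of_nonneg hc.le, mul_pow, mul_pow,
      Real.mul_rpow (by positivity) (by positivity), Real.mul_rpow (by positivity) (by positivity),
      Real.rpow_sub (by positivity : 0 < c ^ 2), Real.rpow_neg_one (c ^ 2)]
    have := Real.rpow_pos_of_pos (by positivity : 0 < c ^ 2) ρ
    field_simp
  simp only [e] at key
  rw [integral_const_mul] at key
  have hp := Real.rpow_pos_of_pos (by positivity : 0 < c ^ 2) ρ
  have key2 : ∫ k : EuclideanSpace ℝ (Fin 4),
      (‖k‖ ^ 2 : ℝ) ^ (-1 - ρ) * (‖k - c • q‖ ^ 2 : ℝ) ^ (-1 : ℝ) = ((c ^ 2) ^ ρ)⁻¹ *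
      ∫ k : EuclideanSpace ℝ (Fin 4),
      (‖k‖ ^ 2 : ℝ) ^ (-1 - ρ) * (‖k - q‖ ^ 2 : ℝ) ^ (-1 : ℝ) := by
    rw [mul_inv, mul_comm _ (c ^ 4)⁻¹, mul_assoc] at key
    exact (mul_left_cancel₀ (by positivity) key).symm
  unfold F₁
  rw [key2, norm_smul, Real.norm_of_nonneg hc.le, mul_pow,
    Real.mul_rpow (by positivity) (by positivity)]
  field_simp

/-- **Conformal symmetry `ρ ↦ 1−ρ` of the one-loop Mellin transform.**
For `0 < ρ < 1`, the normalized Mellin transform `F₁(ρ; q)` does not depend on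
the nonzero external momentum `q` and is invariant under `ρ ↦ 1 − ρ`. -/
theorem one_loop_mellin_conformal_symmetry
    (ρ : ℝ) (hρ₀ : 0 < ρ) (hρ₁ : ρ < 1)
    (q q' : EuclideanSpace ℝ (Fin 4)) (hq : q ≠ 0) (hq' : q' ≠ 0) :
    F₁ ρ q = F₁ (1 - ρ) q' := by
  rw [aux_inversion ρ q hq]
  have h1 : 0 < ‖q‖ := norm_pos_iff.2 hq
  have h2 : 0 < ‖q'‖ := norm_pos_iff.2 hq'
  rw [← aux_scale (1 - ρ) (‖q'‖ / ‖q‖) (by positivity) q]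
  apply aux_isometry
  rw [norm_smul, Real.norm_of_nonneg (by positivity)]
  field_simp
end

section
/- For every measurable function f : ℝ⁴ → [0, ∞], the conformal inversion k ↦ k/‖k‖² is a change of variables for the Lebesgue integral: ∫_{ℝ⁴} f(x) dx = ∫_{ℝ⁴} f(y/‖y‖²) · ‖y‖^{−8} dy. -/
open MeasureTheory

/-- **Conformal inversion as a change of variables in `ℝ⁴`.**
For every measurable `f : ℝ⁴ → [0,∞]`, the inversion `k ↦ k/‖k‖²` transforms the
Lebesgue integral as `∫ f(x) dx = ∫ f(y/‖y‖²) ‖y‖⁻⁸ dy`. -/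
theorem conformal_inversion_change_of_variables
    (f : EuclideanSpace ℝ (Fin 4) → ENNReal) (hf : Measurable f) :
    ∫⁻ x : EuclideanSpace ℝ (Fin 4), f x =
      ∫⁻ y : EuclideanSpace ℝ (Fin 4),
        f ((‖y‖ ^ 2 : ℝ)⁻¹ • y) * ENNReal.ofReal (‖y‖ ^ (-8 : ℝ)) := by
  have hinv : ∀ y : EuclideanSpace ℝ (Fin 4),
      EuclideanGeometry.inversion 0 1 y = (‖y‖ ^ 2 : ℝ)⁻¹ • y := by
    intro y
    simp [EuclideanGeometry.inversion]
  set s : Set (EuclideanSpace ℝ (Fin 4)) := {0}ᶜ with hs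
  have hsm : MeasurableSet s := (measurableSet_singleton 0).compl
  have hae : s =ᵐ[volume] Set.univ := by
    rw [ae_eq_univ, hs, compl_compl]
    exact measure_singleton 0
  have himg : EuclideanGeometry.inversion (0 : EuclideanSpace ℝ (Fin 4)) 1 '' s = s := by
    rw [hs, Set.image_compl_eq (EuclideanGeometry.inversion_bijective _ one_ne_zero)]
    simp
  have key := lintegral_image_eq_lintegral_abs_det_fderiv_mul volume hsm
    (fun x hx => (EuclideanGeometry.hasFDerivAt_inversion (R := 1)
      (show x ≠ 0 from hx)).hasFDerivWithinAt)
    (EuclideanGeometry.inversion_injective _ one_ne_zero).injOn f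
  rw [himg] at key
  rw [← setLIntegral_univ, ← setLIntegral_univ (μ := volume) (f := fun y => _ * _),
    ← setLIntegral_congr hae, ← setLIntegral_congr hae, key]
  refine setLIntegral_congr_fun hsm fun y hy => ?_
  have hy0 : y ≠ 0 := hy
  have hpos : 0 < ‖y‖ := norm_pos_iff.2 hy0
  simp only [hinv]
  rw [mul_comm]
  congr 2
  have hdet : |LinearMap.det ((ℝ ∙ (y - 0))ᗮ.reflection.toLinearMap)| = 1 := by
    rw [Submodule.det_reflection, abs_pow]
    simp
  have h1 : ∀ (c : ℝ) (A : EuclideanSpace ℝ (Fin 4) →L[ℝ] EuclideanSpace ℝ (Fin 4)),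
      (c • A).det = c ^ 4 * A.det := by
    intro c A
    simp [ContinuousLinearMap.det]
  rw [h1, abs_mul]
  have h2 : |ContinuousLinearMap.det
      (((ℝ ∙ (y - 0))ᗮ.reflection : EuclideanSpace ℝ (Fin 4) →L[ℝ] EuclideanSpace ℝ (Fin 4)))|
      = 1 := hdet
  rw [h2, mul_one, dist_zero_right, Real.rpow_neg hpos.le, abs_of_nonneg (by positivity)]
  rw [show (8 : ℝ) = ((8 : ℕ) : ℝ) by norm_num, Real.rpow_natCast]
  field_simp
end

section
/- For every real x with 0 < |x| < 1, 4 · Σ_{n=1}^{∞} n · ζ(2n+1) · (1 − 4^{−n}) · x^{2n−2} = (1/x) · Σ_{k=1}^{∞} [ 1/(k−x)² − 1/(k+x)² ] − (1/(2x)) · Σ_{k=1}^{∞} [ 1/(k−x/2)² − 1/(k+x/2)² ]. Equivalently, 4 Σ_{n≥1} n ζ(2n+1) (1 − 2^{−2n}) x^{2n−2} = −(1/x)[ψ′(1+x) − ψ′(1−x)] + (1/(2x))[ψ′(1+x/2) − ψ′(1−x/2)]. -/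
/-- The Riemann zeta value `ζ(s) = ∑_{k=1}^∞ k^(−s)` for a natural exponent `s`. -/
noncomputable def zetaR (s : ℕ) : ℝ := ∑' k : ℕ, 1 / ((k : ℝ) + 1) ^ s

/-- The trigamma function `ψ′(z) = ∑_{m=0}^∞ 1/(m+z)²`. -/
noncomputable def trigamma (z : ℝ) : ℝ := ∑' m : ℕ, 1 / ((m : ℝ) + z) ^ 2

theorem aux_geom (y : ℝ) (hy : |y| < 1) :
    HasSum (fun n : ℕ => ((n : ℝ) + 1) * y ^ (2 * n)) (1 / (1 - y ^ 2) ^ 2) := by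
  have h2 : ‖y ^ 2‖ < 1 := by
    rw [norm_pow, Real.norm_eq_abs]
    have := abs_nonneg y
    nlinarith
  have h := hasSum_choose_mul_geometric_of_norm_lt_one 1 h2
  have e : (fun n : ℕ => ((n : ℝ) + 1) * y ^ (2 * n)) =
      fun n : ℕ => (((n + 1).choose 1 : ℕ) : ℝ) * (y ^ 2) ^ n := by
    funext n
    rw [Nat.choose_one_right, pow_mul]
    push_cast
    ring
  rw [e]
  exact h

theorem aux_summable_cube : Summable (fun k : ℕ => 1 / ((k : ℝ) + 1) ^ 3) := by
  have h := (summable_nat_add_iff 1).2 (Real.summable_one_div_nat_pow.2 (by norm_num : 1 < 3))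
  simpa using h

theorem aux_summable_sq (z : ℝ) : Summable (fun k : ℕ => 1 / ((k : ℝ) + z) ^ 2) := by
  have h := (Real.summable_one_div_nat_add_rpow z 2).2 (by norm_num)
  simpa [Real.rpow_natCast] using h

theorem aux_prod (y : ℝ) (hy : |y| < 1) :
    Summable (fun p : ℕ × ℕ => ((p.1 : ℝ) + 1) * y ^ (2 * p.1) *
      (1 / ((p.2 : ℝ) + 1) ^ (2 * p.1 + 3))) := by
  have hn : ∀ n : ℕ, 0 ≤ ((n : ℝ) + 1) * y ^ (2 * n) := fun n => by
    rw [pow_mul]; positivity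
  have h := (aux_geom y hy).summable.mul_of_nonneg aux_summable_cube
    (fun n => hn n) (fun k => by positivity)
  refine Summable.of_nonneg_of_le (fun p => mul_nonneg (hn _) (by positivity)) (fun p => ?_) h
  refine mul_le_mul_of_nonneg_left ?_ (hn _)
  refine one_div_le_one_div_of_le (by positivity) ?_
  refine pow_le_pow_right₀ ?_ (by omega)
  have : (0 : ℝ) ≤ (p.2 : ℝ) := by positivity
  linarith

theorem aux_main (y : ℝ) (hy : |y| < 1) :
    Summable (fun n : ℕ => ((n : ℝ) + 1) * zetaR (2 * n + 3) * y ^ (2 * n)) ∧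
    ∑' k : ℕ, (1 / (((k : ℝ) + 1) - y) ^ 2 - 1 / (((k : ℝ) + 1) + y) ^ 2) =
      4 * y * ∑' n : ℕ, ((n : ℝ) + 1) * zetaR (2 * n + 3) * y ^ (2 * n) := by
  have hp := aux_prod y hy
  have e1 : ∀ n : ℕ, ∑' k : ℕ, ((n : ℝ) + 1) * y ^ (2 * n) * (1 / ((k : ℝ) + 1) ^ (2 * n + 3))
      = ((n : ℝ) + 1) * zetaR (2 * n + 3) * y ^ (2 * n) := fun n => by
    rw [tsum_mul_left, zetaR]; ring
  have e2 : ∀ k : ℕ, 4 * y * ∑' n : ℕ, ((n : ℝ) + 1) * y ^ (2 * n) *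
      (1 / ((k : ℝ) + 1) ^ (2 * n + 3))
      = 1 / (((k : ℝ) + 1) - y) ^ 2 - 1 / (((k : ℝ) + 1) + y) ^ 2 := fun k => by
    have hk : (0 : ℝ) < (k : ℝ) + 1 := by positivity
    have hk1 : (1 : ℝ) ≤ (k : ℝ) + 1 := by
      have : (0 : ℝ) ≤ (k : ℝ) := by positivity
      linarith
    have hyk : |y / ((k : ℝ) + 1)| < 1 := by
      rw [abs_div, abs_of_pos hk, div_lt_one hk]; linarith
    have h := ((aux_geom _ hyk).mul_right (1 / ((k : ℝ) + 1) ^ 3)).tsum_eq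
    have e : ∀ n : ℕ, ((n : ℝ) + 1) * y ^ (2 * n) * (1 / ((k : ℝ) + 1) ^ (2 * n + 3)) =
        ((n : ℝ) + 1) * (y / ((k : ℝ) + 1)) ^ (2 * n) * (1 / ((k : ℝ) + 1) ^ 3) := fun n => by
      rw [div_pow, pow_add]
      field_simp
    rw [tsum_congr e, h]
    obtain ⟨ha, hb⟩ := abs_lt.1 hy
    generalize (k : ℝ) + 1 = t at *
    have h1 : t - y ≠ 0 := by linarith
    have h2 : t + y ≠ 0 := by linarith
    have h4 : 1 - (y / t) ^ 2 = (t - y) * (t + y) / t ^ 2 := by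
      field_simp; ring
    rw [h4]
    field_simp
    ring
  refine ⟨?_, ?_⟩
  · have := hp.prod
    simpa only [e1] using this
  · rw [← tsum_congr e2, tsum_mul_left, ← tsum_congr e1]
    congr 1
    exact hp.tsum_comm

/-- **The two-loop Mellin series via trigamma differences.**
For `0 < |x| < 1`,
`4 ∑_{n≥1} n ζ(2n+1)(1−4^(−n)) x^(2n−2)
  = (1/x) ∑_{k≥1}[1/(k−x)² − 1/(k+x)²] − (1/(2x)) ∑_{k≥1}[1/(k−x/2)² − 1/(k+x/2)²]`,
equivalently
`= −(1/x)[ψ′(1+x) − ψ′(1−x)] + (1/(2x))[ψ′(1+x/2) − ψ′(1−x/2)]`.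
(The sums over `n ≥ 1` and `k ≥ 1` are indexed by `n+1`, `k+1` for `n k : ℕ`.) -/
theorem two_loop_mellin_series_eq_trigamma (x : ℝ) (hx₀ : x ≠ 0) (hx₁ : |x| < 1) :
    (4 * ∑' n : ℕ, ((n : ℝ) + 1) * zetaR (2 * n + 3) *
          (1 - 1 / (4 : ℝ) ^ (n + 1)) * x ^ (2 * n) =
      (1 / x) * ∑' k : ℕ,
          (1 / (((k : ℝ) + 1) - x) ^ 2 - 1 / (((k : ℝ) + 1) + x) ^ 2) -
        (1 / (2 * x)) * ∑' k : ℕ,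
          (1 / (((k : ℝ) + 1) - x / 2) ^ 2 - 1 / (((k : ℝ) + 1) + x / 2) ^ 2)) ∧
    (4 * ∑' n : ℕ, ((n : ℝ) + 1) * zetaR (2 * n + 3) *
          (1 - 1 / (4 : ℝ) ^ (n + 1)) * x ^ (2 * n) =
      -(1 / x) * (trigamma (1 + x) - trigamma (1 - x)) +
        (1 / (2 * x)) * (trigamma (1 + x / 2) - trigamma (1 - x / 2))) := by
  have hx2 : |x / 2| < 1 := by
    rw [abs_div, abs_two]
    have := abs_nonneg x
    linarith
  obtain ⟨s1, t1⟩ := aux_main x hx₁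
  obtain ⟨s2, t2⟩ := aux_main (x / 2) hx2
  have tri : ∀ y : ℝ, ∑' k : ℕ, (1 / (((k : ℝ) + 1) - y) ^ 2 - 1 / (((k : ℝ) + 1) + y) ^ 2) =
      trigamma (1 - y) - trigamma (1 + y) := fun y => by
    rw [trigamma, trigamma, ← (aux_summable_sq _).tsum_sub (aux_summable_sq _)]
    refine tsum_congr fun k => ?_
    congr 3 <;> ring
  have key : 4 * ∑' n : ℕ, ((n : ℝ) + 1) * zetaR (2 * n + 3) *
          (1 - 1 / (4 : ℝ) ^ (n + 1)) * x ^ (2 * n) =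
      (1 / x) * ∑' k : ℕ,
          (1 / (((k : ℝ) + 1) - x) ^ 2 - 1 / (((k : ℝ) + 1) + x) ^ 2) -
        (1 / (2 * x)) * ∑' k : ℕ,
          (1 / (((k : ℝ) + 1) - x / 2) ^ 2 - 1 / (((k : ℝ) + 1) + x / 2) ^ 2) := by
    have e : ∀ n : ℕ, ((n : ℝ) + 1) * zetaR (2 * n + 3) *
          (1 - 1 / (4 : ℝ) ^ (n + 1)) * x ^ (2 * n) =
        ((n : ℝ) + 1) * zetaR (2 * n + 3) * x ^ (2 * n) -
        1 / 4 * (((n : ℝ) + 1) * zetaR (2 * n + 3) * (x / 2) ^ (2 * n)) := fun n => by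
      have h4 : (2 : ℝ) ^ (2 * n) = 4 ^ n := by rw [pow_mul]; norm_num
      rw [div_pow, h4, pow_succ]
      field_simp
    rw [tsum_congr e, s1.tsum_sub (s2.mul_left _), tsum_mul_left, t1, t2]
    field_simp
    try ring
  refine ⟨key, ?_⟩
  rw [key, tri, tri]
  ring
end

section
/- Define for γ ∈ (0,1) the two-loop bracket B(γ) := 1/(γ²(1−γ)²) − 4 · Σ_{n=1}^{∞} n · ζ(2n+1) · (1 − 4^{−n}) · [ γ^{2n−2} + (1−γ)^{2n−2} ]. Then the apparent second-order poles of B at the endpoints are only first-order poles: lim_{γ → 0⁺} γ · B(γ) = 1 and lim_{γ → 1⁻} (1−γ) · B(γ) = 1. -/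
open Filter Topology

/-- The two-loop bracket
`B(γ) = 1/(γ²(1−γ)²) − 4 ∑_{n≥1} n ζ(2n+1)(1−4^(−n)) [γ^(2n−2) + (1−γ)^(2n−2)]`.
(The sum over `n ≥ 1` is indexed by `n+1` for `n : ℕ`.) -/
noncomputable def twoLoopBracket (γ : ℝ) : ℝ :=
  1 / (γ ^ 2 * (1 - γ) ^ 2) -
    4 * ∑' n : ℕ, ((n : ℝ) + 1) * zetaR (2 * n + 3) *
      (1 - 1 / (4 : ℝ) ^ (n + 1)) * (γ ^ (2 * n) + (1 - γ) ^ (2 * n))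

lemma zetaR_bounds : ∃ C : ℝ, 0 ≤ C ∧ ∀ n : ℕ, 1 ≤ zetaR (2 * n + 3) ∧
    zetaR (2 * n + 3) ≤ 1 + C / 4 ^ n := by
  have h2 : Summable (fun k : ℕ => 1 / ((k : ℝ) + 2) ^ 2) := by
    have := (summable_nat_add_iff 2).mpr (Real.summable_one_div_nat_pow.mpr (one_lt_two))
    simpa using this
  refine ⟨∑' k : ℕ, 1 / ((k : ℝ) + 2) ^ 2, tsum_nonneg fun k => by positivity, fun n => ?_⟩
  have hs : Summable (fun k : ℕ => 1 / ((k : ℝ) + 1) ^ (2 * n + 3)) := by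
    have := (summable_nat_add_iff 1).mpr
      (Real.summable_one_div_nat_pow.mpr (show 1 < 2 * n + 3 by omega))
    simpa using this
  have hs' : Summable (fun k : ℕ => 1 / ((k : ℝ) + 2) ^ (2 * n + 3)) := by
    have := (summable_nat_add_iff 2).mpr
      (Real.summable_one_div_nat_pow.mpr (show 1 < 2 * n + 3 by omega))
    simpa using this
  have hz : zetaR (2 * n + 3) = 1 + ∑' k : ℕ, 1 / ((k : ℝ) + 2) ^ (2 * n + 3) := by
    rw [zetaR, hs.tsum_eq_zero_add]
    congr 1
    · simp
    · refine tsum_congr fun k => ?_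
      push_cast
      ring_nf
  rw [hz]
  constructor
  · have : 0 ≤ ∑' k : ℕ, 1 / ((k : ℝ) + 2) ^ (2 * n + 3) := tsum_nonneg fun k => by positivity
    linarith
  · rw [← tsum_div_const]
    have := hs'.tsum_le_tsum (g := fun k : ℕ => 1 / ((k : ℝ) + 2) ^ 2 / 4 ^ n) (fun k => ?_)
      (h2.div_const _)
    · linarith
    · rw [div_div]
      have hk : (0 : ℝ) ≤ k := Nat.cast_nonneg k
      apply one_div_le_one_div_of_le (by positivity)
      have h4 : (4 : ℝ) ^ n ≤ (((k : ℝ) + 2) ^ 2) ^ n := by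
        apply pow_le_pow_left₀ (by norm_num)
        nlinarith
      calc ((k : ℝ) + 2) ^ 2 * 4 ^ n ≤ ((k : ℝ) + 2) ^ 2 * (((k : ℝ) + 2) ^ 2) ^ n := by gcongr
        _ = ((k : ℝ) + 2) ^ (2 * n + 2) := by rw [← pow_mul]; ring
        _ ≤ ((k : ℝ) + 2) ^ (2 * n + 3) := by
          apply pow_le_pow_right₀ <;> [linarith; omega]

noncomputable def rCoef (n : ℕ) : ℝ :=
  ((n : ℝ) + 1) * (zetaR (2 * n + 3) * (1 - 1 / (4 : ℝ) ^ (n + 1)) - 1)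

lemma rCoef_summable : Summable (fun n => |rCoef n|) := by
  obtain ⟨C, hC, h⟩ := zetaR_bounds
  have hg : Summable (fun n : ℕ => (1 + C) * (((n : ℝ) + 1) * (1 / 4) ^ n)) := by
    apply Summable.mul_left
    have h1 := summable_pow_mul_geometric_of_norm_lt_one 1 (r := (1 / 4 : ℝ)) (by norm_num)
    have h0 := summable_pow_mul_geometric_of_norm_lt_one 0 (r := (1 / 4 : ℝ)) (by norm_num)
    refine (h1.add h0).congr fun n => ?_
    ring
  refine Summable.of_nonneg_of_le (fun n => abs_nonneg _) (fun n => ?_) hg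
  obtain ⟨ha, hb⟩ := h n
  have hn : (0 : ℝ) ≤ (n : ℝ) + 1 := by positivity
  rw [rCoef, abs_mul, abs_of_nonneg hn]
  have e : (1 / 4 : ℝ) ^ n = 1 / 4 ^ n := by rw [div_pow, one_pow]
  have e' : 1 / (4 : ℝ) ^ (n + 1) = (1 / 4 : ℝ) ^ n / 4 := by rw [e, pow_succ]; field_simp
  have hq0 : 0 ≤ (1 / 4 : ℝ) ^ n := by positivity
  have hq1 : (1 / 4 : ℝ) ^ n ≤ 1 := pow_le_one₀ (by norm_num) (by norm_num)
  have hb' : zetaR (2 * n + 3) ≤ 1 + C * (1 / 4 : ℝ) ^ n := by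
    rw [e]; rw [mul_one_div]; exact hb
  rw [e']
  generalize (1 / 4 : ℝ) ^ n = q at *
  generalize zetaR (2 * n + 3) = z at *
  have : |z * (1 - q / 4) - 1| ≤ (1 + C) * q := by
    have hCq : C * q ≤ C := by nlinarith
    have hz : z ≤ 1 + C := by linarith
    rw [abs_le]
    constructor <;> nlinarith [mul_nonneg hC hq0, mul_le_mul_of_nonneg_right hz hq0]
  calc _ ≤ ((n : ℝ) + 1) * ((1 + C) * q) := by gcongr
    _ = _ := by ring

lemma rTerm_le {x : ℝ} (h0 : 0 ≤ x) (h1 : x ≤ 1) (n : ℕ) :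
    ‖rCoef n * x ^ (2 * n)‖ ≤ |rCoef n| := by
  rw [norm_mul, Real.norm_eq_abs, Real.norm_eq_abs, abs_of_nonneg (pow_nonneg h0 _)]
  exact mul_le_of_le_one_right (abs_nonneg _) (pow_le_one₀ h0 h1)

lemma hasSum_main {x : ℝ} (h0 : 0 ≤ x) (h1 : x < 1) :
    HasSum (fun n : ℕ => ((n : ℝ) + 1) * zetaR (2 * n + 3) *
      (1 - 1 / (4 : ℝ) ^ (n + 1)) * x ^ (2 * n))
      (1 / (1 - x ^ 2) ^ 2 + ∑' n, rCoef n * x ^ (2 * n)) := by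
  have hx : ‖x ^ 2‖ < 1 := by
    rw [Real.norm_eq_abs, abs_of_nonneg (by positivity)]; nlinarith
  have hr : Summable (fun n => rCoef n * x ^ (2 * n)) :=
    Summable.of_norm_bounded rCoef_summable (rTerm_le h0 h1.le)
  have hc : HasSum (fun n : ℕ => (((n + 1).choose 1 : ℕ) : ℝ) * (x ^ 2) ^ n)
      (1 / (1 - x ^ 2) ^ 2) := hasSum_choose_mul_geometric_of_norm_lt_one 1 hx
  have key := hc.add hr.hasSum
  have e : (fun n : ℕ => ((n : ℝ) + 1) * zetaR (2 * n + 3) *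
      (1 - 1 / (4 : ℝ) ^ (n + 1)) * x ^ (2 * n)) =
      fun n : ℕ => (((n + 1).choose 1 : ℕ) : ℝ) * (x ^ 2) ^ n + rCoef n * x ^ (2 * n) := by
    funext n
    rw [Nat.choose_one_right, rCoef, ← pow_mul]
    push_cast
    ring
  rw [e]
  exact key

lemma bracket_eq {γ : ℝ} (h0 : 0 < γ) (h1 : γ < 1) :
    γ * twoLoopBracket γ = (4 - 3 * γ) / ((1 - γ) ^ 2 * (2 - γ) ^ 2)
      - γ * (4 / (1 - γ ^ 2) ^ 2)
      - γ * (4 * (∑' n, rCoef n * γ ^ (2 * n) + ∑' n, rCoef n * (1 - γ) ^ (2 * n))) := by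
  have hs := (hasSum_main h0.le h1).add
    (hasSum_main (x := 1 - γ) (by linarith) (by linarith))
  simp only [← mul_add] at hs
  rw [twoLoopBracket, hs.tsum_eq]
  generalize ∑' n, rCoef n * γ ^ (2 * n) = F
  generalize ∑' n, rCoef n * (1 - γ) ^ (2 * n) = G
  have a : γ ≠ 0 := h0.ne'
  have b : 1 - γ ≠ 0 := by linarith
  have c : 2 - γ ≠ 0 := by linarith
  have e : 1 - (1 - γ) ^ 2 = γ * (2 - γ) := by ring
  have key : γ * (1 / (γ ^ 2 * (1 - γ) ^ 2)) - γ * (4 * (1 / (γ * (2 - γ)) ^ 2)) =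
      (4 - 3 * γ) / ((1 - γ) ^ 2 * (2 - γ) ^ 2) := by
    field_simp
    ring
  rw [e, ← key]
  ring

lemma limit_zero : Tendsto (fun γ : ℝ => γ * twoLoopBracket γ) (𝓝[>] 0) (𝓝 1) := by
  have hev : ∀ᶠ γ : ℝ in 𝓝[>] 0, 0 < γ ∧ γ < 1 :=
    Ioo_mem_nhdsGT (zero_lt_one)
  have hid : Tendsto (fun γ : ℝ => γ) (𝓝[>] 0) (𝓝 0) := nhdsWithin_le_nhds
  have t1 : Tendsto (fun γ : ℝ => (4 - 3 * γ) / ((1 - γ) ^ 2 * (2 - γ) ^ 2)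
      - γ * (4 / (1 - γ ^ 2) ^ 2)) (𝓝[>] 0) (𝓝 1) := by
    have : ContinuousAt (fun γ : ℝ => (4 - 3 * γ) / ((1 - γ) ^ 2 * (2 - γ) ^ 2)
      - γ * (4 / (1 - γ ^ 2) ^ 2)) 0 := by
      fun_prop (disch := norm_num)
    have h := this.tendsto.mono_left (nhdsWithin_le_nhds (s := Set.Ioi 0))
    norm_num at h
    exact h
  have t2 : Tendsto (fun γ : ℝ => γ * (4 * (∑' n, rCoef n * γ ^ (2 * n) +
      ∑' n, rCoef n * (1 - γ) ^ (2 * n)))) (𝓝[>] 0) (𝓝 0) := by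
    have hM := hid.mul_const (4 * (∑' n, |rCoef n| + ∑' n, |rCoef n|))
    rw [zero_mul] at hM
    refine squeeze_zero_norm' ?_ hM
    filter_upwards [hev] with γ hγ
    have b1 := tsum_of_norm_bounded rCoef_summable.hasSum (rTerm_le hγ.1.le hγ.2.le)
    have b2 := tsum_of_norm_bounded rCoef_summable.hasSum
      (rTerm_le (x := 1 - γ) (by linarith [hγ.2]) (by linarith [hγ.1]))
    rw [norm_mul, norm_mul, Real.norm_of_nonneg hγ.1.le, Real.norm_of_nonneg (show (0:ℝ) ≤ 4 by norm_num)]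
    have := hγ.1.le
    gcongr
    exact (norm_add_le _ _).trans (add_le_add b1 b2)
  have t := t1.sub t2
  rw [sub_zero] at t
  refine t.congr' ?_
  filter_upwards [hev] with γ hγ
  exact (bracket_eq hγ.1 hγ.2).symm

lemma bracket_symm (γ : ℝ) : twoLoopBracket (1 - γ) = twoLoopBracket γ := by
  unfold twoLoopBracket
  rw [sub_sub_cancel, mul_comm ((1 - γ) ^ 2)]
  simp only [add_comm (γ ^ _)]

/-- **The apparent double poles of the two-loop bracket are only simple poles:**
`γ · B(γ) → 1` as `γ → 0⁺` and `(1−γ) · B(γ) → 1` as `γ → 1⁻`. -/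
theorem twoLoopBracket_simple_poles :
    Tendsto (fun γ : ℝ => γ * twoLoopBracket γ) (𝓝[>] 0) (𝓝 1) ∧
    Tendsto (fun γ : ℝ => (1 - γ) * twoLoopBracket γ) (𝓝[<] 1) (𝓝 1) := by
  refine ⟨limit_zero, ?_⟩
  have h : Tendsto (fun γ : ℝ => 1 - γ) (𝓝[<] 1) (𝓝[>] 0) := by
    refine tendsto_nhdsWithin_iff.mpr ⟨?_, ?_⟩
    · have : ContinuousAt (fun γ : ℝ => 1 - γ) 1 := by fun_prop
      have h := this.tendsto.mono_left (nhdsWithin_le_nhds (s := Set.Iio 1))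
      simpa using h
    · filter_upwards [self_mem_nhdsWithin] with γ hγ
      simpa using hγ
  refine (limit_zero.comp h).congr fun γ => ?_
  simp only [Function.comp, bracket_symm]
end
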